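/- Let A and B be n×n complex positive definite matrices and let h, h' be reals with 1 < h' ≤ h such that h'·A ≤ B ≤ h·A in the Loewner order (equivalently h'·I ≤ A^{−1/2} B A^{−1/2} ≤ h·I). Then for every p ∈ [0,1], with r := min{p, 1−p} and R := max{p, 1−p}, one has K(h',2)^r · (A #_p B) ≤ A ∇_p B ≤ K(h,2)^R · (A #_p B) in the Loewner order. -/

import Mathlib

open Matrix ComplexOrder

/-- Real power of a (Hermitian) complex matrix via the continuous functional calculus,
corresponding to `Matrix.PosDef.rpow` on positive definite matrices. -/
noncomputable def mrpow {n : Type*} [Fintype n] [DecidableEq n]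
    (A : Matrix n n ℂ) (r : ℝ) : Matrix n n ℂ :=
  cfc (fun t : ℝ => t ^ r) A

/-- The Loewner order: `loe X Y` means `Y - X` is positive semidefinite. -/
def loe {n : Type*} [Fintype n] (X Y : Matrix n n ℂ) : Prop :=
  (Y - X).PosSemidef

/-- `A ♮ᵣ B = A^{1/2} (A^{-1/2} B A^{-1/2})^r A^{1/2}`; for `r ∈ [0,1]` this is the
weighted geometric mean `A #ᵣ B`. -/
noncomputable def natu {n : Type*} [Fintype n] [DecidableEq n]
    (A B : Matrix n n ℂ) (r : ℝ) : Matrix n n ℂ :=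
  mrpow A (1 / 2) * mrpow (mrpow A (-(1 / 2)) * B * mrpow A (-(1 / 2))) r * mrpow A (1 / 2)

/-- The Tsallis relative operator entropy `T_p(A|B) = (A #_p B - A) / p`. -/
noncomputable def TsallisEntropy {n : Type*} [Fintype n] [DecidableEq n]
    (A B : Matrix n n ℂ) (p : ℝ) : Matrix n n ℂ :=
  (1 / p : ℝ) • (natu A B p - A)

/-!
Write `Q = a^{-1/2} b a^{-1/2}`. The means `a #_p b` and `a ∇_p b` are `a^{1/2} f(Q) a^{1/2}` for
`f t = t ^ p` and `f t = (1 - p) + p * t`, so both bounds are inequalities between functions on the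
spectrum of `Q`, which lies in `[h', h]`. Since `K(t, 2) * t = ((1 + t) / 2) ^ 2`, comparing
`K(t, 2) ^ p * t ^ p` with `(1 - p) + p * t` is Bernoulli's inequality for the exponent `2 * p`. The
substitution `t ↦ t⁻¹`, under which `K` is invariant, gives the same comparison for
`K(t, 2) ^ (1 - p) * t ^ p`.
-/

open scoped MatrixOrder

section Scalar

/-- The Kantorovich constant `K(x, 2)`, which measures the gap between the arithmetic and the
geometric mean in Young's inequality. -/
noncomputable def kantorovich (x : ℝ) : ℝ := (x + 1) ^ (2 : ℕ) / (4 * x)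

lemma kantorovich_pos {x : ℝ} (hx : 0 < x) : 0 < kantorovich x := by
  unfold kantorovich
  positivity

lemma kantorovich_inv {x : ℝ} (hx : x ≠ 0) : kantorovich x⁻¹ = kantorovich x := by
  unfold kantorovich
  field_simp
  ring

lemma kantorovich_mul_self {x : ℝ} (hx : x ≠ 0) : kantorovich x * x = (1 + (x - 1) / 2) ^ 2 := by
  unfold kantorovich
  field_simp
  ring

lemma monotoneOn_kantorovich : MonotoneOn kantorovich (Set.Ici 1) := by
  intro x (hx : 1 ≤ x) y (hy : 1 ≤ y) hxy
  have hxy_one : 1 ≤ x * y := one_le_mul_of_one_le_of_one_le hx hy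
  have cross_diff : 0 ≤ (y - x) * (x * y - 1) :=
    mul_nonneg (sub_nonneg.2 hxy) (sub_nonneg.2 hxy_one)
  unfold kantorovich
  rw [div_le_div_iff₀ (by positivity) (by positivity)]
  linarith

variable {x p q : ℝ}

lemma kantorovich_rpow_mul_rpow (hx : 0 < x) (q : ℝ) :
    kantorovich x ^ q * x ^ q = (1 + (x - 1) / 2) ^ (2 * q) := by
  rw [← Real.mul_rpow (kantorovich_pos hx).le hx.le, kantorovich_mul_self hx.ne',
    Real.rpow_mul (by linarith), Real.rpow_two]

lemma kantorovich_rpow_mul_rpow_le (hx : 0 < x) (hq0 : 0 ≤ q) (hq : q ≤ 1 / 2) :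
    kantorovich x ^ q * x ^ q ≤ (1 - q) + q * x := by
  rw [kantorovich_rpow_mul_rpow hx]
  calc (1 + (x - 1) / 2) ^ (2 * q) ≤ 1 + 2 * q * ((x - 1) / 2) :=
        rpow_one_add_le_one_add_mul_self (by linarith) (by linarith) (by linarith)
    _ = (1 - q) + q * x := by ring

lemma le_kantorovich_rpow_mul_rpow (hx : 0 < x) (hq : 1 / 2 ≤ q) :
    (1 - q) + q * x ≤ kantorovich x ^ q * x ^ q := by
  rw [kantorovich_rpow_mul_rpow hx]
  calc (1 - q) + q * x = 1 + 2 * q * ((x - 1) / 2) := by ring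
    _ ≤ (1 + (x - 1) / 2) ^ (2 * q) :=
        one_add_mul_self_le_rpow_one_add (by linarith) (by linarith)

lemma kantorovich_rpow_mul_rpow_one_sub (hx : 0 < x) (q : ℝ) :
    kantorovich x ^ q * x ^ (1 - q) = x * (kantorovich x⁻¹ ^ q * x⁻¹ ^ q) := by
  rw [kantorovich_inv hx.ne', Real.inv_rpow hx.le, Real.rpow_sub hx, Real.rpow_one]
  ring

lemma kantorovich_rpow_mul_rpow_one_sub_le (hx : 0 < x) (hq0 : 0 ≤ q) (hq : q ≤ 1 / 2) :
    kantorovich x ^ q * x ^ (1 - q) ≤ q + (1 - q) * x := by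
  rw [kantorovich_rpow_mul_rpow_one_sub hx]
  calc x * (kantorovich x⁻¹ ^ q * x⁻¹ ^ q) ≤ x * ((1 - q) + q * x⁻¹) := by
        gcongr
        exact kantorovich_rpow_mul_rpow_le (inv_pos.2 hx) hq0 hq
    _ = q + (1 - q) * x := by
        field_simp
        ring

lemma le_kantorovich_rpow_mul_rpow_one_sub (hx : 0 < x) (hq : 1 / 2 ≤ q) :
    q + (1 - q) * x ≤ kantorovich x ^ q * x ^ (1 - q) := by
  rw [kantorovich_rpow_mul_rpow_one_sub hx]
  calc q + (1 - q) * x = x * ((1 - q) + q * x⁻¹) := by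
        field_simp
        ring
    _ ≤ x * (kantorovich x⁻¹ ^ q * x⁻¹ ^ q) := by
        gcongr
        exact le_kantorovich_rpow_mul_rpow (inv_pos.2 hx) hq

theorem kantorovich_rpow_min_mul_rpow_le (hx : 0 < x) (hp0 : 0 ≤ p) (hp1 : p ≤ 1) :
    kantorovich x ^ min p (1 - p) * x ^ p ≤ (1 - p) + p * x := by
  rcases le_total p (1 - p) with hp | hp
  · rw [min_eq_left hp]
    exact kantorovich_rpow_mul_rpow_le hx hp0 (by linarith)
  · rw [min_eq_right hp]
    simpa only [sub_sub_cancel] using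
      kantorovich_rpow_mul_rpow_one_sub_le hx (sub_nonneg.2 hp1) (by linarith)

theorem le_kantorovich_rpow_max_mul_rpow (hx : 0 < x) (p : ℝ) :
    (1 - p) + p * x ≤ kantorovich x ^ max p (1 - p) * x ^ p := by
  rcases le_total p (1 - p) with hp | hp
  · rw [max_eq_right hp]
    simpa only [sub_sub_cancel] using
      le_kantorovich_rpow_mul_rpow_one_sub (q := 1 - p) hx (by linarith)
  · rw [max_eq_left hp]
    exact le_kantorovich_rpow_mul_rpow hx (by linarith)

end Scalar

section Operator

variable {A : Type*} [PartialOrder A] [Ring A] [StarRing A] [TopologicalSpace A]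
  [StarOrderedRing A] [Algebra ℝ A] [ContinuousFunctionalCalculus ℝ A IsSelfAdjoint]
  [NonnegSpectrumClass ℝ A]

/-- The symmetrized quotient `a^{-1/2} b a^{-1/2}` of `b` by `a`; its spectrum records the
position of `b` relative to `a`. -/
noncomputable def symmQuotient (a b : A) : A :=
  a ^ (-(1 / 2) : ℝ) * b * a ^ (-(1 / 2) : ℝ)

/-- The operator perspective `a^{1/2} f(a^{-1/2} b a^{-1/2}) a^{1/2}` of a real function `f`; the
weighted arithmetic and geometric means are instances of it. -/
noncomputable def perspective (f : ℝ → ℝ) (a b : A) : A :=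
  a ^ (1 / 2 : ℝ) * cfc f (symmQuotient a b) * a ^ (1 / 2 : ℝ)

/-- The weighted geometric mean `a #_p b`, with no restriction on the real weight `p`. -/
noncomputable def weightedGeomMean (a b : A) (p : ℝ) : A :=
  a ^ (1 / 2 : ℝ) * symmQuotient a b ^ p * a ^ (1 / 2 : ℝ)

variable {a b c : A}

lemma symmQuotient_mono (hbc : b ≤ c) : symmQuotient a b ≤ symmQuotient a c :=
  CFC.rpow_nonneg.isSelfAdjoint.conjugate_le_conjugate hbc

lemma isSelfAdjoint_symmQuotient (hb : IsSelfAdjoint b) : IsSelfAdjoint (symmQuotient a b) :=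
  hb.conjugate_self CFC.rpow_nonneg.isSelfAdjoint

lemma symmQuotient_nonneg (hb : 0 ≤ b) : 0 ≤ symmQuotient a b :=
  CFC.rpow_nonneg.isSelfAdjoint.conjugate_nonneg hb

lemma rpow_half_mul_rpow_half (ha : IsStrictlyPositive a) :
    a ^ (1 / 2 : ℝ) * a ^ (1 / 2 : ℝ) = a := by
  rw [← CFC.rpow_add ha.isUnit, add_halves, CFC.rpow_one a ha.nonneg]

lemma symmQuotient_smul_self (ha : IsStrictlyPositive a) (r : ℝ) :
    symmQuotient a (r • a) = algebraMap ℝ A r := by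
  have quotient_self : a ^ (-(1 / 2) : ℝ) * a * a ^ (-(1 / 2) : ℝ) = 1 := by
    nth_rw 2 [← rpow_half_mul_rpow_half ha]
    rw [← mul_assoc, CFC.rpow_neg_mul_rpow _ ha, one_mul, CFC.rpow_mul_rpow_neg _ ha]
  rw [symmQuotient, mul_smul_comm, smul_mul_assoc, quotient_self, Algebra.algebraMap_eq_smul_one]

lemma rpow_half_mul_symmQuotient_mul_rpow_half (ha : IsStrictlyPositive a) :
    a ^ (1 / 2 : ℝ) * symmQuotient a b * a ^ (1 / 2 : ℝ) = b := by
  calc a ^ (1 / 2 : ℝ) * (a ^ (-(1 / 2) : ℝ) * b * a ^ (-(1 / 2) : ℝ)) * a ^ (1 / 2 : ℝ)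
      = (a ^ (1 / 2 : ℝ) * a ^ (-(1 / 2) : ℝ)) * b * (a ^ (-(1 / 2) : ℝ) * a ^ (1 / 2 : ℝ)) := by
        simp only [mul_assoc]
    _ = b := by
        rw [CFC.rpow_mul_rpow_neg _ ha, CFC.rpow_neg_mul_rpow _ ha, one_mul, mul_one]

lemma le_of_mem_spectrum_symmQuotient (ha : IsStrictlyPositive a) (hb : IsSelfAdjoint b) {r x : ℝ}
    (hab : r • a ≤ b) (hx : x ∈ spectrum ℝ (symmQuotient a b)) : r ≤ x := by
  have quotient_ge : algebraMap ℝ A r ≤ symmQuotient a b :=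
    symmQuotient_smul_self ha r ▸ symmQuotient_mono hab
  exact (algebraMap_le_iff_le_spectrum (isSelfAdjoint_symmQuotient hb)).1 quotient_ge x hx

lemma mem_spectrum_symmQuotient_le (ha : IsStrictlyPositive a) (hb : IsSelfAdjoint b) {r x : ℝ}
    (hba : b ≤ r • a) (hx : x ∈ spectrum ℝ (symmQuotient a b)) : x ≤ r := by
  have quotient_le : symmQuotient a b ≤ algebraMap ℝ A r :=
    symmQuotient_smul_self ha r ▸ symmQuotient_mono hba
  exact (le_algebraMap_iff_spectrum_le (isSelfAdjoint_symmQuotient hb)).1 quotient_le x hx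

lemma continuousOn_rpow_const_spectrum_symmQuotient (ha : IsStrictlyPositive a)
    (hb : IsSelfAdjoint b) {r : ℝ} (hr : 0 < r) (hab : r • a ≤ b) (p : ℝ) :
    ContinuousOn (fun t ↦ t ^ p) (spectrum ℝ (symmQuotient a b)) :=
  continuousOn_id.rpow_const fun _ hx ↦
    Or.inl (hr.trans_le (le_of_mem_spectrum_symmQuotient ha hb hab hx)).ne'

lemma perspective_mono {f g : ℝ → ℝ} (hf : ContinuousOn f (spectrum ℝ (symmQuotient a b)))
    (hg : ContinuousOn g (spectrum ℝ (symmQuotient a b)))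
    (hfg : ∀ x ∈ spectrum ℝ (symmQuotient a b), f x ≤ g x) :
    perspective f a b ≤ perspective g a b :=
  CFC.rpow_nonneg.isSelfAdjoint.conjugate_le_conjugate (cfc_mono hfg hf hg)

lemma perspective_const_mul (r : ℝ) {f : ℝ → ℝ}
    (hf : ContinuousOn f (spectrum ℝ (symmQuotient a b))) :
    perspective (fun t ↦ r * f t) a b = r • perspective f a b := by
  rw [perspective, cfc_const_mul r f _ hf, mul_smul_comm, smul_mul_assoc, perspective]

lemma perspective_const_add_const_mul (ha : IsStrictlyPositive a) (hb : IsSelfAdjoint b)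
    (r s : ℝ) : perspective (fun t ↦ r + s * t) a b = r • a + s • b := by
  have hQ := isSelfAdjoint_symmQuotient (a := a) hb
  rw [perspective, cfc_const_add r (fun t ↦ s * t) _, cfc_const_mul_id s _,
    Algebra.algebraMap_eq_smul_one, mul_add, add_mul, mul_smul_comm, mul_smul_comm,
    smul_mul_assoc, smul_mul_assoc, mul_one, rpow_half_mul_rpow_half ha,
    rpow_half_mul_symmQuotient_mul_rpow_half ha]

variable [IsSemitopologicalRing A] [T2Space A] {h h' p : ℝ}

lemma weightedGeomMean_eq_perspective (hb : 0 ≤ b) (p : ℝ) :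
    weightedGeomMean a b p = perspective (fun t ↦ t ^ p) a b := by
  rw [weightedGeomMean, CFC.rpow_eq_cfc_real (symmQuotient_nonneg hb), perspective]

theorem kantorovich_rpow_min_smul_weightedGeomMean_le (ha : IsStrictlyPositive a) (hb : 0 ≤ b)
    (hh' : 1 ≤ h') (hlow : h' • a ≤ b) (hp0 : 0 ≤ p) (hp1 : p ≤ 1) :
    kantorovich h' ^ min p (1 - p) • weightedGeomMean a b p ≤ (1 - p) • a + p • b := by
  have hh'_pos : 0 < h' := zero_lt_one.trans_le hh'
  have hcont := continuousOn_rpow_const_spectrum_symmQuotient ha hb.isSelfAdjoint hh'_pos hlow p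
  rw [weightedGeomMean_eq_perspective hb, ← perspective_const_mul _ hcont,
    ← perspective_const_add_const_mul ha hb.isSelfAdjoint]
  refine perspective_mono (continuousOn_const.mul hcont) (by fun_prop) fun x hx ↦ ?_
  have hx_ge : h' ≤ x := le_of_mem_spectrum_symmQuotient ha hb.isSelfAdjoint hlow hx
  have hx_pos : 0 < x := hh'_pos.trans_le hx_ge
  calc kantorovich h' ^ min p (1 - p) * x ^ p ≤ kantorovich x ^ min p (1 - p) * x ^ p := by
        gcongr
        · exact (kantorovich_pos hh'_pos).le
        · exact monotoneOn_kantorovich hh' (hh'.trans hx_ge) hx_ge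
    _ ≤ (1 - p) + p * x := kantorovich_rpow_min_mul_rpow_le hx_pos hp0 hp1

theorem le_kantorovich_rpow_max_smul_weightedGeomMean (ha : IsStrictlyPositive a) (hb : 0 ≤ b)
    (hh' : 1 ≤ h') (hlow : h' • a ≤ b) (hup : b ≤ h • a) (p : ℝ) :
    (1 - p) • a + p • b ≤ kantorovich h ^ max p (1 - p) • weightedGeomMean a b p := by
  have hh'_pos : 0 < h' := zero_lt_one.trans_le hh'
  have hcont := continuousOn_rpow_const_spectrum_symmQuotient ha hb.isSelfAdjoint hh'_pos hlow p
  rw [weightedGeomMean_eq_perspective hb, ← perspective_const_mul _ hcont,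
    ← perspective_const_add_const_mul ha hb.isSelfAdjoint]
  refine perspective_mono (by fun_prop) (continuousOn_const.mul hcont) fun x hx ↦ ?_
  have hx_ge : 1 ≤ x := hh'.trans (le_of_mem_spectrum_symmQuotient ha hb.isSelfAdjoint hlow hx)
  have hx_le : x ≤ h := mem_spectrum_symmQuotient_le ha hb.isSelfAdjoint hup hx
  have hx_pos : 0 < x := zero_lt_one.trans_le hx_ge
  calc (1 - p) + p * x ≤ kantorovich x ^ max p (1 - p) * x ^ p :=
        le_kantorovich_rpow_max_mul_rpow hx_pos p
    _ ≤ kantorovich h ^ max p (1 - p) * x ^ p := by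
        gcongr
        · exact (kantorovich_pos hx_pos).le
        · exact le_max_iff.2 ((le_total 0 p).imp_right fun hp ↦ by linarith)
        · exact monotoneOn_kantorovich hx_ge (hx_ge.trans hx_le) hx_le

theorem stmt12_general (ha : IsStrictlyPositive a) (hb : 0 ≤ b) (hh' : 1 ≤ h')
    (hlow : h' • a ≤ b) (hup : b ≤ h • a) (hp0 : 0 ≤ p) (hp1 : p ≤ 1) :
    kantorovich h' ^ min p (1 - p) • weightedGeomMean a b p ≤ (1 - p) • a + p • b ∧
    (1 - p) • a + p • b ≤ kantorovich h ^ max p (1 - p) • weightedGeomMean a b p :=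
  ⟨kantorovich_rpow_min_smul_weightedGeomMean_le ha hb hh' hlow hp0 hp1,
    le_kantorovich_rpow_max_smul_weightedGeomMean ha hb hh' hlow hup p⟩

end Operator

section Matrix

variable {n : Type*} [Fintype n] [DecidableEq n] {A B : Matrix n n ℂ}

lemma mrpow_eq_rpow (hA : A.PosSemidef) (r : ℝ) : mrpow A r = A ^ r :=
  (CFC.rpow_eq_cfc_real hA.nonneg).symm

lemma natu_eq_weightedGeomMean (hA : A.PosSemidef) (hB : B.PosSemidef) (p : ℝ) :
    natu A B p = weightedGeomMean A B p := by
  have hQ : (symmQuotient A B).PosSemidef := (symmQuotient_nonneg hB.nonneg).posSemidef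
  rw [natu, mrpow_eq_rpow hA, mrpow_eq_rpow hA, ← symmQuotient, mrpow_eq_rpow hQ, weightedGeomMean]

end Matrix

theorem stmt12 {n : Type*} [Fintype n] [DecidableEq n] {A B : Matrix n n ℂ}
    (hA : A.PosDef) (hB : B.PosDef) {h h' : ℝ} (hh'1 : 1 < h') (hh'h : h' ≤ h)
    (hlow : loe (h' • A) B) (hup : loe B (h • A))
    {p : ℝ} (hp0 : 0 ≤ p) (hp1 : p ≤ 1) :
    loe ((((h' + 1) ^ (2 : ℕ) / (4 * h')) ^ min p (1 - p)) • natu A B p)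
      ((1 - p) • A + p • B) ∧
    loe ((1 - p) • A + p • B)
      ((((h + 1) ^ (2 : ℕ) / (4 * h)) ^ max p (1 - p)) • natu A B p) := by
  rw [natu_eq_weightedGeomMean hA.posSemidef hB.posSemidef]
  exact stmt12_general hA.isStrictlyPositive hB.posSemidef.nonneg hh'1.le hlow hup hp0 hp1
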